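/- Let P be a finite 2-group containing no subgroup isomorphic to C4 × C2. Then P is elementary abelian, cyclic, generalized quaternion, dihedral, or semidihedral. -/

import Mathlib

/-- The relators of the semidihedral group of order `2^(n+1)`:
`⟨h, a | h^(2^n) = a^2 = 1, a h a = h^(2^(n-1) - 1)⟩`. -/
def semidihedralRels (n : ℕ) : Set (FreeGroup Bool) :=
  { FreeGroup.of true ^ (2 ^ n), FreeGroup.of false ^ 2,
    FreeGroup.of false * FreeGroup.of true * FreeGroup.of false *
      (FreeGroup.of true ^ (2 ^ (n - 1) - 1))⁻¹ }

/-- The semidihedral group of order `2^(n+1)`. -/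
abbrev SemidihedralGroup (n : ℕ) := PresentedGroup (semidihedralRels n)

/-- `C4 × C2`. -/
abbrev C4xC2 := Multiplicative (ZMod 4) × Multiplicative (ZMod 2)

theorem commute_involution_eq_of_no_C4xC2 {P : Type*} [Group P]
    (hno : ¬ ∃ f : C4xC2 →* P, Function.Injective f) {y t : P} (hy : orderOf y = 4)
    (ht : t ^ 2 = 1) (hty : Commute t y) : t = 1 ∨ t = y ^ 2 := by
  by_contra! hne
  obtain ⟨ht1, hty2⟩ := hne
  have hto : orderOf t = 2 := orderOf_eq_prime ht ht1
  have e1 : Multiplicative (ZMod 4) ≃* Subgroup.zpowers y :=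
    zmodMulEquivOfGenerator (g := ⟨y, Subgroup.mem_zpowers y⟩)
      (fun x => by
        obtain ⟨x, i, rfl⟩ := x
        exact ⟨i, by ext; simp⟩) (by simp [hy])
  have e2 : Multiplicative (ZMod 2) ≃* Subgroup.zpowers t :=
    zmodMulEquivOfGenerator (g := ⟨t, Subgroup.mem_zpowers t⟩)
      (fun x => by
        obtain ⟨x, i, rfl⟩ := x
        exact ⟨i, by ext; simp⟩) (by simp [hto])
  let f1 := (Subgroup.zpowers y).subtype.comp e1.toMonoidHom
  let f2 := (Subgroup.zpowers t).subtype.comp e2.toMonoidHom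
  have hcomm : ∀ m n, Commute (f1 m) (f2 n) := by
    intro m n
    obtain ⟨i, hi⟩ := (e1 m).2
    obtain ⟨j, hj⟩ := (e2 n).2
    change Commute (e1 m : P) (e2 n : P)
    rw [← hi, ← hj]
    exact (hty.symm.zpow_zpow i j)
  apply hno
  refine ⟨f1.noncommCoprod f2 hcomm, ?_⟩
  rw [injective_iff_map_eq_one]
  rintro ⟨m, n⟩ hmn
  rw [MonoidHom.noncommCoprod_apply] at hmn
  change (e1 m : P) * (e2 n : P) = 1 at hmn
  obtain ⟨i, hi⟩ := (e1 m).2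
  obtain ⟨j, hj⟩ := (e2 n).2
  have hj1 : (e2 n : P) = 1 := by
    rcases Int.even_or_odd' j with ⟨q, rfl | rfl⟩
    · rw [← hj]
      simp only
      rw [zpow_mul]
      simp [show t ^ (2 : ℤ) = 1 from mod_cast ht]
    · exfalso
      have htj : (e2 n : P) = t := by
        rw [← hj]
        simp only
        rw [zpow_add, zpow_mul]
        simp [show t ^ (2 : ℤ) = 1 from mod_cast ht]
      rw [htj, ← hi] at hmn
      simp only at hmn
      have hti : t = y ^ (-i) := by rw [zpow_neg]; exact (inv_eq_of_mul_eq_one_right hmn).symm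
      have h4 : (4 : ℤ) ∣ 2 * i := by
        have : y ^ (2 * i) = 1 := by
          have h2 : (y ^ (-i)) ^ 2 = 1 := hti ▸ ht
          rw [← zpow_natCast, ← zpow_mul] at h2
          rw [← inv_inj, ← zpow_neg, inv_one, ← h2]
          congr 1; push_cast; ring
        have := orderOf_dvd_iff_zpow_eq_one.2 this
        rwa [hy] at this
      obtain ⟨q, rfl⟩ : (2 : ℤ) ∣ i := by omega
      have hy4 : y ^ (4 : ℤ) = 1 := mod_cast hy ▸ pow_orderOf_eq_one y
      rcases Int.even_or_odd' q with ⟨r, rfl | rfl⟩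
      · apply ht1
        rw [hti, show -(2 * (2 * r)) = 4 * (-r) by ring, zpow_mul, hy4, one_zpow]
      · apply hty2
        rw [hti, show -(2 * (2 * r + 1)) = 4 * (-r - 1) + 2 by ring, zpow_add, zpow_mul, hy4,
          one_zpow, one_mul, zpow_ofNat]
  rw [hj1, mul_one] at hmn
  have h1 : e1 m = 1 := Subtype.ext hmn
  have h2 : e2 n = 1 := Subtype.ext hj1
  rw [MulEquiv.map_eq_one_iff] at h1 h2
  rw [h1, h2]
  rfl

theorem IsPGroup.exists_sq_mem_of_lt {P : Type*} [Group P] [Finite P] (hP : IsPGroup 2 P)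
    {K L : Subgroup P} (hKL : K < L) :
    ∃ g ∈ L, g ∉ K ∧ g ^ 2 ∈ K ∧ ∀ k ∈ K, g * k * g⁻¹ ∈ K := by
  have : Fact (Nat.Prime 2) := ⟨Nat.prime_two⟩
  have := (hP.to_subgroup L).isNilpotent
  have hlt : K.subgroupOf L < ⊤ := by
    rw [lt_top_iff_ne_top, Ne, Subgroup.subgroupOf_eq_top]
    exact hKL.not_ge
  obtain ⟨g, hgN, hgK⟩ := SetLike.exists_of_lt (Group.normalizerCondition_of_isNilpotent _ hlt)
  obtain ⟨m, hm⟩ := hP g.1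
  have hex : ∃ m, g.1 ^ 2 ^ m ∈ K := ⟨m, hm ▸ one_mem K⟩
  classical
  have hpos : Nat.find hex ≠ 0 := by
    intro h0
    have := Nat.find_spec hex
    rw [h0] at this
    exact hgK (by simpa [Subgroup.mem_subgroupOf] using this)
  obtain ⟨r, hr⟩ := Nat.exists_eq_succ_of_ne_zero hpos
  refine ⟨g.1 ^ 2 ^ r, pow_mem g.2 _, Nat.find_min hex (by omega), ?_, fun k hk => ?_⟩
  · rw [← pow_mul, ← pow_succ]
    have := Nat.find_spec hex
    rwa [hr] at this
  · have h1 := (Subgroup.mem_normalizer_iff.1 (pow_mem hgN (2 ^ r)) ⟨k, hKL.le hk⟩).1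
      (by simpa [Subgroup.mem_subgroupOf] using hk)
    simpa [Subgroup.mem_subgroupOf] using h1

theorem exists_int_mul_odd_dvd_add {n : ℕ} {u : ℤ} (hu : Odd u) (j : ℤ) :
    ∃ i : ℤ, (2 ^ n : ℤ) ∣ i * u + j := by
  have hc : IsCoprime u (2 ^ n : ℤ) := by
    apply IsCoprime.pow_right
    obtain ⟨l, rfl⟩ := hu
    exact ⟨1, -l, by ring⟩
  obtain ⟨a, b, hab⟩ := hc
  exact ⟨-j * a, j * b, by linear_combination (-j) * hab⟩

theorem conj_zpow_eq {P : Type*} [Group P] {g h : P} {k : ℤ} (hk : g * h * g⁻¹ = h ^ k) (i : ℤ) :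
    g * h ^ i = h ^ (k * i) * g := by
  rw [zpow_mul, ← hk, conj_zpow]
  group

theorem exists_centralizer_eq_zpowers {P : Type*} [Group P] [Finite P] (hP : IsPGroup 2 P)
    (hno : ¬ ∃ f : C4xC2 →* P, Function.Injective f) {y : P} (hy : orderOf y = 4) :
    ∃ h : P, Subgroup.centralizer {y} = Subgroup.zpowers h := by
  have : Fact (Nat.Prime 2) := ⟨Nat.prime_two⟩
  have : Nonempty {h : P // y ∈ Subgroup.zpowers h} := ⟨⟨y, Subgroup.mem_zpowers y⟩⟩
  obtain ⟨⟨h, hyh⟩, hmax⟩ :=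
    Finite.exists_max (fun h : {h : P // y ∈ Subgroup.zpowers h} => orderOf h.1)
  refine ⟨h, ?_⟩
  by_contra hne
  have hle : Subgroup.zpowers h ≤ Subgroup.centralizer {y} := by
    rw [Subgroup.zpowers_le, Subgroup.mem_centralizer_singleton_iff]
    obtain ⟨m, rfl⟩ := hyh
    exact (Commute.refl h).zpow_right m
  obtain ⟨g, hgC, hgH, ⟨j, hj⟩, hconj⟩ := hP.exists_sq_mem_of_lt (lt_of_le_of_ne hle (Ne.symm hne))
  simp only at hj
  rw [Subgroup.mem_centralizer_singleton_iff] at hgC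
  obtain ⟨k, hk⟩ := hconj h (Subgroup.mem_zpowers h)
  replace hk : g * h * g⁻¹ = h ^ k := hk.symm
  obtain ⟨n, hn⟩ := IsPGroup.iff_orderOf.1 hP h
  have hk4 : (4 : ℤ) ∣ k - 1 := by
    obtain ⟨m, hm⟩ := hyh
    simp only at hm
    have h1 := conj_zpow_eq hk m
    rw [mul_comm, zpow_mul, hm, hgC] at h1
    rw [show (4 : ℤ) = (orderOf y : ℤ) by rw [hy]; rfl, orderOf_dvd_iff_zpow_eq_one, zpow_sub_one,
      ← mul_right_cancel h1, mul_inv_cancel]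
  rcases Int.even_or_odd' j with ⟨j', hj' | hj'⟩
  · obtain ⟨l, hl⟩ := hk4
    obtain ⟨i, hi⟩ := exists_int_mul_odd_dvd_add (n := n) (u := 2 * l + 1) ⟨l, rfl⟩ j'
    have hsq : (h ^ i * g) ^ 2 = 1 := by
      have : (h ^ i * g) ^ 2 = h ^ (i + k * i + j) := by
        rw [zpow_add, hj, zpow_add, sq, sq, mul_assoc, ← mul_assoc g, conj_zpow_eq hk]
        group
      rw [this, ← orderOf_dvd_iff_zpow_eq_one, hn]
      obtain ⟨q, hq⟩ := hi
      refine ⟨2 * q, ?_⟩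
      push_cast
      linear_combination 2 * hq + i * hl + hj'
    have hcomm : Commute (h ^ i * g) y := by
      apply Commute.mul_left _ hgC
      exact Commute.zpow_left (Subgroup.mem_centralizer_singleton_iff.1
        (hle (Subgroup.mem_zpowers h))) i
    have hmem : h ^ i * g ∈ Subgroup.zpowers h := by
      rcases commute_involution_eq_of_no_C4xC2 hno hy hsq hcomm with h1 | h1 <;> rw [h1]
      · exact one_mem _
      · exact pow_mem hyh 2
    exact hgH ((Subgroup.mul_mem_cancel_left _ (zpow_mem (Subgroup.mem_zpowers h) i)).1 hmem)
  · obtain ⟨i, hi⟩ := exists_int_mul_odd_dvd_add (n := n) (u := j) ⟨j', hj'⟩ (-1)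
    have hhg : Subgroup.zpowers h ≤ Subgroup.zpowers g := by
      rw [Subgroup.zpowers_le]
      have : h = (g ^ 2) ^ i := by
        rw [← hj, ← zpow_mul, ← mul_inv_eq_one, ← zpow_neg_one, ← zpow_one h, ← zpow_mul,
          ← zpow_mul, ← zpow_add, ← orderOf_dvd_iff_zpow_eq_one, hn]
        obtain ⟨q, hq⟩ := hi
        exact ⟨-q, by push_cast; linear_combination -hq⟩
      rw [this]
      exact zpow_mem (pow_mem (Subgroup.mem_zpowers g) 2) i
    have := Subgroup.eq_of_le_of_card_ge hhg
      (by simpa [Nat.card_zpowers] using hmax ⟨g, hhg hyh⟩)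
    exact hgH (this ▸ Subgroup.mem_zpowers g)

theorem IsPGroup.sq_eq_one_of_orderOf_ne_four {P : Type*} [Group P] (hP : IsPGroup 2 P) {e : P}
    (he : ∀ i : ℕ, orderOf (e ^ i) ≠ 4) : e ^ 2 = 1 := by
  have : Fact (Nat.Prime 2) := ⟨Nat.prime_two⟩
  obtain ⟨k, hk⟩ := IsPGroup.iff_orderOf.1 hP e
  rcases Nat.lt_or_ge k 2 with h | h
  · rw [← orderOf_dvd_iff_pow_eq_one, hk]
    exact pow_dvd_pow 2 (show k ≤ 1 by omega)
  · exfalso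
    apply he (2 ^ (k - 2))
    rw [orderOf_pow_of_dvd (by positivity) (hk ▸ pow_dvd_pow 2 (by omega)), hk,
      Nat.pow_div (by omega) two_pos, show k - (k - 2) = 2 by omega]
    rfl

theorem commute_of_forall_sq_eq_one {P : Type*} [Group P] {a b : P} (ha : a ^ 2 = 1)
    (hb : b ^ 2 = 1) (hab : (a * b) ^ 2 = 1) : Commute a b := by
  rw [sq, mul_eq_one_iff_eq_inv] at ha hb hab
  rw [mul_inv_rev, ← ha, ← hb] at hab
  exact hab

theorem exists_orderOf_four_conj {P : Type*} [Group P] [Finite P] (hP : IsPGroup 2 P)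
    (hno : ¬ ∃ f : C4xC2 →* P, Function.Injective f) {w : P} (hw : orderOf w = 4) :
    ∃ y : P, orderOf y = 4 ∧ ∀ g, g * y * g⁻¹ = y ∨ g * y * g⁻¹ = y⁻¹ := by
  have : Fact (Nat.Prime 2) := ⟨Nat.prime_two⟩
  have hw4 : w ^ 4 = 1 := hw ▸ pow_orderOf_eq_one w
  have exists_central : ∀ (Q : Type _) [Group Q] [Finite Q], IsPGroup 2 Q → Nontrivial Q →
      ∃ q ∈ Subgroup.center Q, orderOf q = 2 := by
    intro Q _ _ hQ _
    have := hQ.center_nontrivial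
    obtain ⟨n, hn, hc⟩ := (hQ.to_subgroup (Subgroup.center Q)).nontrivial_iff_card.1 this
    obtain ⟨q, hq⟩ := exists_prime_orderOf_dvd_card' (G := Subgroup.center Q) 2
      (hc ▸ dvd_pow_self 2 hn.ne')
    exact ⟨q, q.2, by rw [← hq, Subgroup.orderOf_coe]⟩
  have hwne : w ≠ 1 := by rintro rfl; simp at hw
  obtain ⟨z, hzc, hz⟩ := exists_central P hP ⟨w, 1, hwne⟩
  have hz2 : z ^ 2 = 1 := hz ▸ pow_orderOf_eq_one z
  have hz1 : z ≠ 1 := by rintro rfl; simp at hz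
  have hzcomm : ∀ x, Commute x z := Subgroup.mem_center_iff.1 hzc
  have hsq : ∀ v : P, orderOf v = 4 → v ^ 2 = z := fun v hv =>
    ((commute_involution_eq_of_no_C4xC2 hno hv hz2 (hzcomm v).symm).resolve_left hz1).symm
  have memz : ∀ x ∈ Subgroup.zpowers z, x = 1 ∨ x = z := by
    rintro x ⟨i, rfl⟩
    have hz2' : z ^ (2 : ℤ) = 1 := mod_cast hz2
    rcases Int.even_or_odd' i with ⟨q, rfl | rfl⟩
    · left; simp [zpow_mul, hz2']
    · right; simp [zpow_add, zpow_mul, hz2']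
  have hN : (Subgroup.zpowers z).Normal := ⟨fun n hn g => by
    have : Commute g n := by
      rcases memz n hn with rfl | rfl
      · exact Commute.one_right g
      · exact hzcomm g
    rwa [this.eq, mul_inv_cancel_right]⟩
  have hwz : w ∉ Subgroup.zpowers z := fun h => by
    rcases memz w h with h | h
    · exact hwne h
    · rw [h, hz] at hw; omega
  obtain ⟨q, hqc, hq⟩ := exists_central (P ⧸ Subgroup.zpowers z) (hP.to_quotient _)
    ⟨QuotientGroup.mk w, 1, fun h => hwz ((QuotientGroup.eq_one_iff w).1 h)⟩
  obtain ⟨t, rfl⟩ := QuotientGroup.mk_surjective q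
  have htz : t ∉ Subgroup.zpowers z := fun h => by
    rw [(QuotientGroup.eq_one_iff t).2 h] at hq; simp at hq
  have ht2 : t ^ 2 = 1 ∨ t ^ 2 = z := by
    apply memz
    rw [← QuotientGroup.eq_one_iff, QuotientGroup.mk_pow, ← hq, pow_orderOf_eq_one]
  have htconj : ∀ g, g * t * g⁻¹ = t ∨ g * t * g⁻¹ = t * z := by
    intro g
    have h1 : t⁻¹ * (g * t * g⁻¹) ∈ Subgroup.zpowers z := by
      rw [← QuotientGroup.eq]
      have h2 := Subgroup.mem_center_iff.1 hqc (QuotientGroup.mk g)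
      simp only [QuotientGroup.mk_mul, QuotientGroup.mk_inv]
      rw [h2, mul_inv_cancel_right]
    rcases memz _ h1 with h | h
    · left; exact (inv_mul_eq_one.1 h).symm
    · right; exact inv_mul_eq_iff_eq_mul.1 h
  rcases ht2 with ht2 | ht2
  · have hne : ∀ v, orderOf v = 4 → ¬ Commute t v := by
      intro v hv hc
      rcases commute_involution_eq_of_no_C4xC2 hno hv ht2 hc with h | h
      · exact htz (h ▸ one_mem _)
      · rw [hsq v hv] at h
        exact htz (h ▸ Subgroup.mem_zpowers t)
    have hinv : ∀ e, Commute t e → e ^ 2 = 1 := fun e he =>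
      hP.sq_eq_one_of_orderOf_ne_four fun i hi => hne _ hi (he.pow_right i)
    have hwt : w * t * w⁻¹ = t * z := (htconj w).resolve_left fun h =>
      hne w hw (by rw [mul_inv_eq_iff_eq_mul] at h; exact h.symm)
    have hwinv : w⁻¹ = z * w := by
      rw [← hsq w hw, inv_eq_iff_mul_eq_one, ← hw4]; group
    have key : ∀ e, Commute t e → e * w * e⁻¹ = w ∨ e * w * e⁻¹ = w⁻¹ := by
      intro e he
      have he2 := hinv e he
      have he' : Commute t (w * e * w⁻¹) := by
        have h1 : Commute (w * (t * z) * w⁻¹) (w * e * w⁻¹) :=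
          (Commute.conj_iff w).2 (he.mul_left (hzcomm e).symm)
        have h2 : w * (t * z) * w⁻¹ = t := by
          calc w * (t * z) * w⁻¹ = (w * t * w⁻¹) * (w * z * w⁻¹) := by group
            _ = t * z * z := by rw [hwt, (hzcomm w).eq, mul_inv_cancel_right]
            _ = t := by rw [mul_assoc, ← sq, hz2, mul_one]
        rwa [h2] at h1
      have hee' : Commute e (w * e * w⁻¹) := commute_of_forall_sq_eq_one he2 (hinv _ he')
        (hinv _ (he.mul_right he'))
      have hc2 := hinv _ (he.mul_right he')
      have hcw : Commute (e * (w * e * w⁻¹)) w := by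
        have h1 : w * (e * (w * e * w⁻¹)) * w⁻¹ = e * (w * e * w⁻¹) := by
          calc w * (e * (w * e * w⁻¹)) * w⁻¹ = (w * e * w⁻¹) * (w ^ 2 * e * (w ^ 2)⁻¹) := by group
            _ = (w * e * w⁻¹) * e := by
              rw [hsq w hw, ← (hzcomm e).eq, mul_inv_cancel_right]
            _ = _ := hee'.eq.symm
        rw [mul_inv_eq_iff_eq_mul] at h1
        exact h1.symm
      have heinv : e⁻¹ = e := by rw [inv_eq_iff_mul_eq_one, ← sq, he2]
      have h3 : e * w * e⁻¹ = e * (w * e * w⁻¹) * w := by rw [heinv]; group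
      rcases commute_involution_eq_of_no_C4xC2 hno hw hc2 hcw with h | h
      · left; rw [h3, h, one_mul]
      · right; rw [h3, h, hwinv, hsq w hw]
    refine ⟨w, hw, fun g => ?_⟩
    rcases htconj g with h | h
    · apply key
      rw [mul_inv_eq_iff_eq_mul] at h
      exact h.symm
    · have h1 : Commute t (g * w) := by
        have : (g * w) * t * (g * w)⁻¹ = t := by
          calc (g * w) * t * (g * w)⁻¹ = g * (w * t * w⁻¹) * g⁻¹ := by group
            _ = (g * t * g⁻¹) * (g * z * g⁻¹) := by rw [hwt]; group
            _ = t * z * z := by rw [h, (hzcomm g).eq, mul_inv_cancel_right]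
            _ = t := by rw [mul_assoc, ← sq, hz2, mul_one]
        rw [mul_inv_eq_iff_eq_mul] at this
        exact this.symm
      have h2 := key _ h1
      rwa [show g * w * w * (g * w)⁻¹ = g * w * g⁻¹ by group] at h2
  · have ht4 : orderOf t = 4 := by
      have := orderOf_eq_prime_pow (x := t) (p := 2) (n := 1) (by simpa [ht2] using hz1)
        (by rw [pow_succ, pow_mul, pow_one, ht2, hz2])
      simpa using this
    refine ⟨t, ht4, fun g => ?_⟩
    have htinv : t⁻¹ = t * z := by
      rw [inv_eq_iff_mul_eq_one, ← mul_assoc, ← sq, ht2, ← sq, hz2]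
    rw [htinv]
    exact htconj g

section Recognition

variable {P : Type*} [Group P] {g h : P}

theorem zpow_zmod_cast {N : ℕ} (hN : orderOf h = N) (i : ℤ) :
    h ^ ((i : ZMod N).cast : ℤ) = h ^ i := by
  rw [zpow_eq_zpow_iff_modEq, hN, ← ZMod.intCast_eq_intCast_iff, ZMod.intCast_zmod_cast]

theorem mulEquiv_dihedralGroup {N : ℕ} (hN : orderOf h = N) (hg : g ^ 2 = 1)
    (hconj : g * h * g⁻¹ = h ^ (-1 : ℤ)) (hgh : g ∉ Subgroup.zpowers h)
    (hcov : ∀ x, x ∈ Subgroup.zpowers h ∨ g * x ∈ Subgroup.zpowers h) :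
    Nonempty (P ≃* DihedralGroup N) := by
  have hmove (i : ℤ) : h ^ i * g = g * h ^ (-i) := by
    rw [conj_zpow_eq hconj]; simp
  let f : DihedralGroup N → P
    | .r i => h ^ (i.cast : ℤ)
    | .sr i => g * h ^ (i.cast : ℤ)
  have hr (i : ℤ) : f (.r i) = h ^ i := zpow_zmod_cast hN i
  have hs (i : ℤ) : f (.sr i) = g * h ^ i := congrArg (g * ·) (zpow_zmod_cast hN i)
  have hf : ∀ a b, f (a * b) = f a * f b := by
    rintro (i | i) (j | j) <;> obtain ⟨i, rfl⟩ := ZMod.intCast_surjective i <;>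
      obtain ⟨j, rfl⟩ := ZMod.intCast_surjective j
    · rw [DihedralGroup.r_mul_r, ← Int.cast_add, hr, hr, hr, zpow_add]
    · rw [DihedralGroup.r_mul_sr, ← Int.cast_sub, hr, hs, hs, ← mul_assoc, hmove, mul_assoc,
        ← zpow_add]
      congr 2; ring
    · rw [DihedralGroup.sr_mul_r, ← Int.cast_add, hr, hs, hs, zpow_add, mul_assoc]
    · rw [DihedralGroup.sr_mul_sr, ← Int.cast_sub, hr, hs, hs, mul_assoc, ← mul_assoc (h ^ i), hmove,
        mul_assoc, ← zpow_add, ← mul_assoc, ← sq, hg, one_mul]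
      congr 1; ring
  let F : DihedralGroup N →* P := MonoidHom.mk' f hf
  refine ⟨(MulEquiv.ofBijective F ⟨(injective_iff_map_eq_one F).2 ?_, ?_⟩).symm⟩
  · rintro (i | i) hi <;> obtain ⟨i, rfl⟩ := ZMod.intCast_surjective i
    · replace hi : f (.r i) = 1 := hi
      rw [hr, ← orderOf_dvd_iff_zpow_eq_one, hN] at hi
      rw [(ZMod.intCast_zmod_eq_zero_iff_dvd i N).2 hi, DihedralGroup.r_zero]
    · replace hi : f (.sr i) = 1 := hi
      rw [hs] at hi
      exact absurd
        (eq_inv_of_mul_eq_one_left hi ▸ inv_mem (zpow_mem (Subgroup.mem_zpowers h) i)) hgh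
  · intro x
    rcases hcov x with ⟨i, hi⟩ | ⟨i, hi⟩
    · exact ⟨.r i, (hr i).trans hi⟩
    · refine ⟨.sr i, (hs i).trans ?_⟩
      simp only at hi
      rw [hi, ← mul_assoc, ← sq, hg, one_mul]

theorem mulEquiv_quaternionGroup {m : ℕ} (hN : orderOf h = 2 * m) (hg : g ^ 2 = h ^ (m : ℤ))
    (hconj : g * h * g⁻¹ = h ^ (-1 : ℤ)) (hgh : g ∉ Subgroup.zpowers h)
    (hcov : ∀ x, x ∈ Subgroup.zpowers h ∨ g * x ∈ Subgroup.zpowers h) :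
    Nonempty (P ≃* QuaternionGroup m) := by
  have hmove (i : ℤ) : h ^ i * g = g * h ^ (-i) := by
    rw [conj_zpow_eq hconj]; simp
  let f : QuaternionGroup m → P
    | .a i => h ^ (i.cast : ℤ)
    | .xa i => g * h ^ (i.cast : ℤ)
  have hr (i : ℤ) : f (.a i) = h ^ i := zpow_zmod_cast hN i
  have hs (i : ℤ) : f (.xa i) = g * h ^ i := congrArg (g * ·) (zpow_zmod_cast hN i)
  have hf : ∀ a b, f (a * b) = f a * f b := by
    rintro (i | i) (j | j) <;> obtain ⟨i, rfl⟩ := ZMod.intCast_surjective i <;>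
      obtain ⟨j, rfl⟩ := ZMod.intCast_surjective j
    · rw [QuaternionGroup.a_mul_a, ← Int.cast_add, hr, hr, hr, zpow_add]
    · rw [QuaternionGroup.a_mul_xa, ← Int.cast_sub, hr, hs, hs, ← mul_assoc, hmove, mul_assoc,
        ← zpow_add]
      congr 2; ring
    · rw [QuaternionGroup.xa_mul_a, ← Int.cast_add, hr, hs, hs, zpow_add, mul_assoc]
    · rw [QuaternionGroup.xa_mul_xa, ← Int.cast_natCast, ← Int.cast_add, ← Int.cast_sub, hr, hs, hs,
        mul_assoc, ← mul_assoc (h ^ i), hmove, mul_assoc, ← zpow_add, ← mul_assoc, ← sq, hg,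
        ← zpow_add]
      congr 1; ring
  let F : QuaternionGroup m →* P := MonoidHom.mk' f hf
  refine ⟨(MulEquiv.ofBijective F ⟨(injective_iff_map_eq_one F).2 ?_, ?_⟩).symm⟩
  · rintro (i | i) hi <;> obtain ⟨i, rfl⟩ := ZMod.intCast_surjective i
    · replace hi : f (.a i) = 1 := hi
      rw [hr, ← orderOf_dvd_iff_zpow_eq_one, hN] at hi
      rw [(ZMod.intCast_zmod_eq_zero_iff_dvd i _).2 hi, QuaternionGroup.a_zero]
    · replace hi : f (.xa i) = 1 := hi
      rw [hs] at hi
      exact absurd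
        (eq_inv_of_mul_eq_one_left hi ▸ inv_mem (zpow_mem (Subgroup.mem_zpowers h) i)) hgh
  · intro x
    rcases hcov x with ⟨i, hi⟩ | ⟨i, hi⟩
    · exact ⟨.a i, (hr i).trans hi⟩
    · refine ⟨.xa (i - m : ℤ), (hs _).trans ?_⟩
      simp only at hi
      rw [← mul_right_inj g, ← mul_assoc, ← sq, hg, ← zpow_add, add_sub_cancel, hi]

theorem SemidihedralGroup.exists_normal_form {n : ℕ} (x : SemidihedralGroup n) :
    ∃ i : ℤ, x = PresentedGroup.of true ^ i ∨
      x = PresentedGroup.of false * PresentedGroup.of true ^ i := by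
  set h : SemidihedralGroup n := PresentedGroup.of true with hh
  set a : SemidihedralGroup n := PresentedGroup.of false with ha
  have ha2 : a * a = 1 := by
    have := PresentedGroup.one_of_mem (rels := semidihedralRels n)
      (x := FreeGroup.of false ^ 2) (by simp [semidihedralRels])
    rwa [map_pow, sq] at this
  have hconj : a * h * a⁻¹ = h ^ ((2 ^ (n - 1) - 1 : ℕ) : ℤ) := by
    have := PresentedGroup.one_of_mem (rels := semidihedralRels n)
      (x := FreeGroup.of false * FreeGroup.of true * FreeGroup.of false *
        (FreeGroup.of true ^ (2 ^ (n - 1) - 1))⁻¹) (by simp [semidihedralRels])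
    rw [inv_eq_of_mul_eq_one_right ha2, zpow_natCast]
    simp only [map_mul, map_inv, map_pow, mul_inv_eq_one] at this
    exact this
  generalize ((2 ^ (n - 1) - 1 : ℕ) : ℤ) = k at hconj
  have hmove (i : ℤ) : h ^ i * a = a * h ^ (k * i) := by
    have h1 : a * (h ^ i * a) = a * (a * h ^ (k * i)) := by
      rw [← mul_assoc, conj_zpow_eq hconj, mul_assoc, ha2, ← mul_assoc, ha2, one_mul, mul_one]
    exact mul_left_cancel h1
  let H : Subgroup (SemidihedralGroup n) :=
    { carrier := {x | ∃ i : ℤ, x = h ^ i ∨ x = a * h ^ i}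
      one_mem' := ⟨0, Or.inl (zpow_zero h).symm⟩
      mul_mem' := by
        rintro _ _ ⟨i, rfl | rfl⟩ ⟨j, rfl | rfl⟩
        · exact ⟨i + j, Or.inl (zpow_add h i j).symm⟩
        · exact ⟨k * i + j, Or.inr (by rw [← mul_assoc, hmove, zpow_add, mul_assoc])⟩
        · exact ⟨i + j, Or.inr (by rw [zpow_add, mul_assoc])⟩
        · exact ⟨k * i + j, Or.inl (by
            rw [mul_assoc, ← mul_assoc (h ^ i), hmove, zpow_add, mul_assoc, ← mul_assoc, ha2,
              one_mul])⟩
      inv_mem' := by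
        rintro _ ⟨i, rfl | rfl⟩
        · exact ⟨-i, Or.inl (zpow_neg h i).symm⟩
        · exact ⟨k * -i, Or.inr (by
            rw [mul_inv_rev, inv_eq_of_mul_eq_one_right ha2, ← zpow_neg, hmove])⟩ }
  refine PresentedGroup.generated_by _ H ?_ x
  rintro (_ | _)
  · exact ⟨0, Or.inr (by simp [ha])⟩
  · exact ⟨1, Or.inl (by simp [hh])⟩

theorem mulEquiv_semidihedralGroup {n : ℕ} (hN : orderOf h = 2 ^ n) (hg : g ^ 2 = 1)
    (hconj : g * h * g⁻¹ = h ^ ((2 ^ (n - 1) - 1 : ℕ) : ℤ)) (hgh : g ∉ Subgroup.zpowers h)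
    (hcov : ∀ x, x ∈ Subgroup.zpowers h ∨ g * x ∈ Subgroup.zpowers h) :
    Nonempty (P ≃* SemidihedralGroup n) := by
  have hginv : g⁻¹ = g := by rw [inv_eq_iff_mul_eq_one, ← sq, hg]
  have hrels : ∀ r ∈ semidihedralRels n, FreeGroup.lift (fun b => bif b then h else g) r = 1 := by
    rintro r (rfl | rfl | rfl)
    · simp [← hN, pow_orderOf_eq_one]
    · simpa using hg
    · rw [hginv, zpow_natCast] at hconj
      simp only [map_mul, map_inv, map_pow, FreeGroup.lift_apply_of, cond_true, cond_false]
      rw [hconj, mul_inv_cancel]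
  let F : SemidihedralGroup n →* P := PresentedGroup.toGroup hrels
  have hFh : F (PresentedGroup.of true) = h := PresentedGroup.toGroup.of hrels
  have hFg : F (PresentedGroup.of false) = g := PresentedGroup.toGroup.of hrels
  refine ⟨(MulEquiv.ofBijective F ⟨(injective_iff_map_eq_one F).2 ?_, ?_⟩).symm⟩
  · intro x hx
    obtain ⟨i, rfl | rfl⟩ := SemidihedralGroup.exists_normal_form x
    · rw [map_zpow, hFh, ← orderOf_dvd_iff_zpow_eq_one, hN] at hx
      obtain ⟨q, rfl⟩ := hx
      have := PresentedGroup.one_of_mem (rels := semidihedralRels n)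
        (x := FreeGroup.of true ^ 2 ^ n) (by simp [semidihedralRels])
      rw [map_pow] at this
      rw [zpow_mul, zpow_natCast]
      exact (congrArg (· ^ q) this).trans (one_zpow q)
    · rw [map_mul, map_zpow, hFh, hFg] at hx
      exact absurd
        (eq_inv_of_mul_eq_one_left hx ▸ inv_mem (zpow_mem (Subgroup.mem_zpowers h) i)) hgh
  · intro x
    rcases hcov x with ⟨i, hi⟩ | ⟨i, hi⟩
    · exact ⟨PresentedGroup.of true ^ i, by rw [map_zpow, hFh]; exact hi⟩
    · refine ⟨PresentedGroup.of false * PresentedGroup.of true ^ i, ?_⟩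
      simp only at hi
      rw [map_mul, map_zpow, hFh, hFg, hi, ← mul_assoc, ← sq, hg, one_mul]

end Recognition

/-- A finite 2-group containing no subgroup isomorphic to `C4 × C2` is elementary abelian,
cyclic, generalized quaternion, dihedral, or semidihedral. -/
theorem finite_two_group_no_C4xC2 (P : Type*) [Group P] [Finite P]
    (hP : IsPGroup 2 P)
    (hno : ¬ ∃ f : C4xC2 →* P, Function.Injective f) :
    ((∀ x : P, x ^ 2 = 1) ∧ ∀ x y : P, x * y = y * x) ∨
      IsCyclic P ∨
      (∃ n, 3 ≤ n ∧ Nonempty (P ≃* QuaternionGroup (2 ^ (n - 2)))) ∨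
      (∃ n, Nonempty (P ≃* DihedralGroup n)) ∨
      (∃ n, 3 ≤ n ∧ Nonempty (P ≃* SemidihedralGroup n)) := by
  by_cases hex : ∃ w : P, orderOf w = 4
  swap
  · left
    push Not at hex
    have hsq (x : P) : x ^ 2 = 1 := hP.sq_eq_one_of_orderOf_ne_four fun i => hex _
    exact ⟨hsq, fun x y => commute_of_forall_sq_eq_one (hsq x) (hsq y) (hsq _)⟩
  obtain ⟨w, hw⟩ := hex
  obtain ⟨y, hy, hyconj⟩ := exists_orderOf_four_conj hP hno hw
  obtain ⟨h, hC⟩ := exists_centralizer_eq_zpowers hP hno hy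
  have memC (x : P) : x ∈ Subgroup.zpowers h ↔ x * y = y * x := by
    rw [← hC, Subgroup.mem_centralizer_singleton_iff]
  by_cases htop : ∀ x, x ∈ Subgroup.zpowers h
  · exact Or.inr (Or.inl ⟨h, htop⟩)
  right; right
  push Not at htop
  obtain ⟨g, hgh⟩ := htop
  have notMem {x : P} (hx : x ∉ Subgroup.zpowers h) : x * y * x⁻¹ = y⁻¹ :=
    (hyconj x).resolve_left fun h1 => hx ((memC x).2 (mul_inv_eq_iff_eq_mul.1 h1))
  have hgy := notMem hgh
  have hcov (g' : P) (hg' : g' ∉ Subgroup.zpowers h) (x : P) :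
      x ∈ Subgroup.zpowers h ∨ g' * x ∈ Subgroup.zpowers h := by
    by_cases hx : x ∈ Subgroup.zpowers h
    · exact Or.inl hx
    right
    rw [memC, ← mul_inv_eq_iff_eq_mul]
    calc g' * x * y * (g' * x)⁻¹ = g' * (x * y * x⁻¹) * g'⁻¹ := by group
      _ = (g' * y * g'⁻¹)⁻¹ := by rw [notMem hx]; group
      _ = y := by rw [notMem hg', inv_inv]
  obtain ⟨j, hj⟩ : g ^ 2 ∈ Subgroup.zpowers h := by
    rw [sq]; exact (hcov g hgh g).resolve_left hgh
  simp only at hj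
  obtain ⟨m, hm⟩ : y ∈ Subgroup.zpowers h := (memC y).2 rfl
  simp only at hm
  obtain ⟨k, hk⟩ : g * h * g⁻¹ ∈ Subgroup.zpowers h := by
    have hhy : h * y * h⁻¹ = y :=
      mul_inv_eq_iff_eq_mul.2 ((memC h).1 (Subgroup.mem_zpowers h))
    have hgy' : g⁻¹ * y * g = y⁻¹ := by
      have := notMem (mt inv_mem_iff.1 hgh)
      rwa [inv_inv] at this
    rw [memC, ← mul_inv_eq_iff_eq_mul]
    calc g * h * g⁻¹ * y * (g * h * g⁻¹)⁻¹ = g * (h * (g⁻¹ * y * g) * h⁻¹) * g⁻¹ := by group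
      _ = (g * (h * y * h⁻¹) * g⁻¹)⁻¹ := by rw [hgy']; group
      _ = y := by rw [hhy, hgy, inv_inv]
  replace hk : g * h * g⁻¹ = h ^ k := hk.symm
  have hmove := conj_zpow_eq hk
  have : Fact (Nat.Prime 2) := ⟨Nat.prime_two⟩
  obtain ⟨n, hn⟩ := IsPGroup.iff_orderOf.1 hP h
  have hn2 : 2 ≤ n := by
    have h1 : orderOf y ∣ 2 ^ n := by
      rw [← hn, ← hm]
      exact orderOf_dvd_of_mem_zpowers (zpow_mem (Subgroup.mem_zpowers h) m)
    rw [hy] at h1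
    exact (Nat.pow_dvd_pow_iff_le_right (x := 2) (by norm_num)).1 h1
  obtain ⟨s, rfl⟩ : ∃ s, n = s + 2 := ⟨n - 2, by omega⟩
  set M : ℕ := 2 ^ (s + 1) with hM
  have hN : orderOf h = 2 * M := by rw [hn, hM, ← pow_succ']
  have hdvd (i i' : ℤ) (hi : h ^ i = h ^ i') : (2 * M : ℤ) ∣ i' - i := by
    rw [zpow_eq_zpow_iff_modEq, hN] at hi
    simpa using hi.dvd
  have hpow (i : ℤ) : h ^ (2 * M * i : ℤ) = 1 := by
    rw [← orderOf_dvd_iff_zpow_eq_one, hN]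
    simp
  obtain ⟨l, hl⟩ : (4 : ℤ) ∣ k + 1 := by
    have h1 : y ^ k = y⁻¹ := by
      rw [← hgy, ← hm, hmove, mul_inv_cancel_right, ← zpow_mul, mul_comm]
    rw [show (4 : ℤ) = (orderOf y : ℤ) by rw [hy]; rfl, orderOf_dvd_iff_zpow_eq_one, zpow_add_one,
      h1, inv_mul_cancel]
  have hodd : Odd (2 * l - 1) := ⟨l - 1, by ring⟩
  have hcop : IsCoprime (M : ℤ) (2 * l - 1) := by
    rw [hM]
    push_cast
    exact IsCoprime.pow_left ⟨l, -1, by ring⟩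
  obtain ⟨p, hp⟩ : (M : ℤ) ∣ j := by
    have h1 : h ^ j = h ^ (k * j) := by
      have h2 := hmove j
      rw [hj] at h2
      rw [← mul_left_inj g, ← h2, hj]
      group
    obtain ⟨q, hq⟩ := hdvd _ _ h1
    refine hcop.dvd_of_dvd_mul_left ⟨q, ?_⟩
    have : k = 4 * l - 1 := by omega
    subst this
    linarith
  obtain ⟨r, hr⟩ : (M : ℤ) ∣ k + 1 := by
    have h1 : h ^ (1 : ℤ) = h ^ (k * k) := by
      have h2 : g ^ 2 * h * (g ^ 2)⁻¹ = h := by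
        rw [← hj]; group
      have h3 : g ^ 2 * h * (g ^ 2)⁻¹ = g * (g * h * g⁻¹) * g⁻¹ := by rw [sq]; group
      rw [zpow_one, ← mul_inv_cancel_right (h ^ (k * k)) g, ← hmove, ← hk, ← h3, h2]
    obtain ⟨q, hq⟩ := hdvd _ _ h1
    refine hcop.dvd_of_dvd_mul_left ⟨q, ?_⟩
    have : k = 4 * l - 1 := by omega
    subst this
    linarith
  rcases Int.even_or_odd' r with ⟨r', rfl | rfl⟩
  · have hkinv : g * h * g⁻¹ = h ^ (-1 : ℤ) := by
      rw [hk, show k = 2 * M * r' + -1 by linarith, zpow_add, hpow, one_mul]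
    rcases Int.even_or_odd' p with ⟨p', rfl | rfl⟩
    · have hg2 : g ^ 2 = 1 := by
        rw [← hj, hp, show (M : ℤ) * (2 * p') = 2 * M * p' by ring, hpow]
      exact Or.inr (Or.inl ⟨_, mulEquiv_dihedralGroup hN hg2 hkinv hgh (hcov g hgh)⟩)
    · have hg2 : g ^ 2 = h ^ (M : ℤ) := by
        rw [← hj, hp, show (M : ℤ) * (2 * p' + 1) = 2 * M * p' + M by ring, zpow_add, hpow, one_mul]
      exact Or.inl ⟨s + 3, by omega, mulEquiv_quaternionGroup hN hg2 hkinv hgh (hcov g hgh)⟩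
  · have hs : s ≠ 0 := by
      rintro rfl
      simp only [hM] at hr
      push_cast at hr
      omega
    have hM1 : 1 ≤ M := Nat.one_le_two_pow
    have hkM : g * h * g⁻¹ = h ^ ((2 ^ (s + 2 - 1) - 1 : ℕ) : ℤ) := by
      rw [show s + 2 - 1 = s + 1 by omega, ← hM, Nat.cast_sub hM1, hk,
        show k = 2 * M * r' + (M - 1) by linarith, zpow_add, hpow, one_mul]
      rfl
    refine Or.inr (Or.inr ⟨s + 2, by omega, ?_⟩)
    rcases Int.even_or_odd' p with ⟨p', rfl | rfl⟩
    · have hg2 : g ^ 2 = 1 := by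
        rw [← hj, hp, show (M : ℤ) * (2 * p') = 2 * M * p' by ring, hpow]
      exact mulEquiv_semidihedralGroup hn hg2 hkM hgh (hcov g hgh)
    · have hhg : h * g ∉ Subgroup.zpowers h := fun h1 =>
        hgh ((Subgroup.mul_mem_cancel_left _ (Subgroup.mem_zpowers h)).1 h1)
      have hg2 : (h * g) ^ 2 = 1 := by
        calc (h * g) ^ 2 = h * (g * h * g⁻¹) * g ^ 2 := by rw [sq, sq]; group
          _ = h ^ (1 + k + j) := by rw [hk, ← hj, zpow_add, zpow_add, zpow_one]
          _ = 1 := by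
            rw [show 1 + k + j = 2 * M * (r' + p' + 1) by linarith, hpow]
      refine mulEquiv_semidihedralGroup hn hg2 ?_ hhg (hcov _ hhg)
      calc h * g * h * (h * g)⁻¹ = h * (g * h * g⁻¹) * h⁻¹ := by group
        _ = _ := by rw [hkM, ← zpow_one_add, add_comm, zpow_add_one, mul_inv_cancel_right]
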